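/- Let a > 0 be real with a ≠ 1, let m be an integer, and let s, s' be real numbers with m < s < m+1 and m < s' < m+1, and let z, z' > 0 be real numbers. Then the limit of f_q(z q^{s}, a) as q → 0⁺ exists, the limit of f_q(z' q^{s'}, a) as q → 0⁺ exists, and the two limits are equal. That is, the q → 0⁺ limit of f_q(z q^{s}, a) is a locally constant function of s on the complement of the integers and is independent of z there. -/

import Mathlib

open Filter Topology

/-- The q-theta function
`θ_q(x) = (x^{1/2} - x^{-1/2}) ∏_{i=1}^∞ (1 - x q^i)(1 - x⁻¹ q^i)`. -/
noncomputable def qTheta (q x : ℝ) : ℝ :=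
  (Real.sqrt x - (Real.sqrt x)⁻¹) *
    ∏' i : ℕ, (1 - x * q ^ (i + 1)) * (1 - x⁻¹ * q ^ (i + 1))

/-- `f_q(z, a) = θ_q(a z) / (θ_q(a) θ_q(z))`. -/
noncomputable def fTheta (q z a : ℝ) : ℝ :=
  qTheta q (a * z) / (qTheta q a * qTheta q z)

noncomputable def qP (q x : ℝ) : ℝ := ∏' i : ℕ, (1 - x * q ^ (i + 1))

lemma qP_mult {q : ℝ} (h0 : 0 < q) (h1 : q < 1) (x : ℝ) :
    Multipliable fun i : ℕ => (1 - x * q ^ (i + 1)) := by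
  have hs : Summable fun i : ℕ => -(x * q ^ (i + 1)) :=
    (((summable_nat_add_iff 1).2 (summable_geometric_of_lt_one h0.le h1)).mul_left x).neg
  simpa [sub_eq_add_neg] using Real.multipliable_one_add_of_summable hs

lemma qP_shift {q : ℝ} (h0 : 0 < q) (h1 : q < 1) (x : ℝ) :
    qP q x = (1 - x * q) * qP q (q * x) := by
  unfold qP
  have e : (fun i : ℕ => (1 - x * q ^ (i + 1 + 1))) = fun i : ℕ => (1 - q * x * q ^ (i + 1)) := by
    funext i; ring
  rw [tprod_eq_zero_mul' (by rw [e]; exact qP_mult h0 h1 _), e]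
  simp

lemma qTheta_eq {q : ℝ} (h0 : 0 < q) (h1 : q < 1) (x : ℝ) :
    qTheta q x = (Real.sqrt x - (Real.sqrt x)⁻¹) * (qP q x * qP q x⁻¹) := by
  unfold qTheta qP
  rw [(qP_mult h0 h1 x).tprod_mul (qP_mult h0 h1 x⁻¹)]

lemma qTheta_shift {q : ℝ} (h0 : 0 < q) (h1 : q < 1) {x : ℝ} (hx : 0 < x) :
    qTheta q (q * x) = -(x * Real.sqrt q)⁻¹ * qTheta q x := by
  rw [qTheta_eq h0 h1, qTheta_eq h0 h1, qP_shift h0 h1 x, qP_shift h0 h1 (q * x)⁻¹]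
  have e : q * (q * x)⁻¹ = x⁻¹ := by field_simp
  rw [e, Real.sqrt_mul h0.le]
  obtain ⟨u, hu, rfl⟩ : ∃ u, 0 < u ∧ u ^ 2 = q := ⟨√q, Real.sqrt_pos.2 h0, Real.sq_sqrt h0.le⟩
  obtain ⟨v, hv, rfl⟩ : ∃ u, 0 < u ∧ u ^ 2 = x := ⟨√x, Real.sqrt_pos.2 hx, Real.sq_sqrt hx.le⟩
  rw [Real.sqrt_sq hu.le, Real.sqrt_sq hv.le]
  generalize qP _ _ = A
  generalize qP _ _ = B
  field_simp
  ring

lemma fTheta_shift {q a : ℝ} (h0 : 0 < q) (h1 : q < 1) (ha : 0 < a) {w : ℝ} (hw : 0 < w) :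
    fTheta q (q * w) a = a⁻¹ * fTheta q w a := by
  unfold fTheta
  rw [mul_left_comm a q w, qTheta_shift h0 h1 hw, qTheta_shift h0 h1 (mul_pos ha hw)]
  have : 0 < √q := Real.sqrt_pos.2 h0
  generalize qTheta q (a * w) = A
  generalize qTheta q a = B
  generalize qTheta q w = C
  simp only [div_eq_mul_inv, mul_inv, inv_neg, inv_inv]
  field_simp

lemma fTheta_shift_zpow {q a : ℝ} (h0 : 0 < q) (h1 : q < 1) (ha : 0 < a) {w : ℝ} (hw : 0 < w)
    (m : ℤ) : fTheta q (q ^ m * w) a = (a⁻¹) ^ m * fTheta q w a := by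
  have hai : a⁻¹ ≠ 0 := by positivity
  induction m using Int.induction_on with
  | zero => simp
  | succ n ih =>
    rw [zpow_add_one₀ h0.ne', zpow_add_one₀ hai, mul_comm (q ^ _) q, mul_assoc,
      fTheta_shift h0 h1 ha (by positivity), ih]
    ring
  | pred n ih =>
    have h := fTheta_shift h0 h1 ha (w := q ^ (-(n:ℤ) - 1) * w) (by positivity)
    have e : q * (q ^ (-(n:ℤ) - 1) * w) = q ^ (-(n:ℤ)) * w := by
      rw [zpow_sub_one₀ h0.ne']; field_simp
    rw [e, ih] at h
    rw [zpow_sub_one₀ hai, mul_right_comm, h]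
    field_simp

lemma qP_tendsto {x : ℝ → ℝ} (hx : Tendsto (fun q => x q * q) (𝓝[Set.Ioo (0:ℝ) 1] 0) (𝓝 0)) :
    Tendsto (fun q => qP q (x q)) (𝓝[Set.Ioo (0:ℝ) 1] 0) (𝓝 1) := by
  have hq : Tendsto (fun q : ℝ => q) (𝓝[Set.Ioo (0:ℝ) 1] 0) (𝓝 0) :=
    tendsto_nhdsWithin_of_tendsto_nhds tendsto_id
  have hmem : ∀ᶠ q : ℝ in 𝓝[Set.Ioo (0:ℝ) 1] 0, q ∈ Set.Ioo (0:ℝ) 1 := self_mem_nhdsWithin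
  have hb : ∀ᶠ q : ℝ in 𝓝[Set.Ioo (0:ℝ) 1] 0, ∀ k : ℕ,
      ‖-(x q * q ^ (k + 1))‖ ≤ |x q * q| * (1 / 2) ^ k := by
    filter_upwards [hmem, hq.eventually (ge_mem_nhds (show (0:ℝ) < 1/2 by norm_num))]
      with q h h2 k
    rw [norm_neg, Real.norm_eq_abs, pow_succ', ← mul_assoc, abs_mul _ (q ^ k),
      abs_of_nonneg (pow_nonneg h.1.le k)]
    have := h.1.le
    gcongr
  have key := tendsto_tprod_one_add_of_dominated_convergence
    (𝓕 := 𝓝[Set.Ioo (0:ℝ) 1] 0) (f := fun q (k : ℕ) => -(x q * q ^ (k + 1)))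
    (g := fun _ => (0:ℝ)) (bound := fun k : ℕ => (1 / 2 : ℝ) ^ k)
    summable_geometric_two ?_ ?_
  · simpa [qP, sub_eq_add_neg] using key
  · intro k
    refine squeeze_zero_norm' (hb.mono fun q h => h k) ?_
    simpa using hx.abs.mul_const ((1 / 2 : ℝ) ^ k)
  · filter_upwards [hb, hx.abs.eventually (ge_mem_nhds (show |(0:ℝ)| < 1 by norm_num))] with q h h2 k
    refine (h k).trans ?_
    have : (0:ℝ) ≤ (1/2)^k := by positivity
    nlinarith

lemma rpow_tendsto {t : ℝ} (ht : 0 < t) (c : ℝ) :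
    Tendsto (fun q : ℝ => c * q ^ t) (𝓝[Set.Ioo (0:ℝ) 1] 0) (𝓝 0) := by
  have : Tendsto (fun q : ℝ => c * q ^ t) (𝓝 0) (𝓝 (c * 0 ^ t)) :=
    ((Real.continuousAt_rpow_const 0 t (Or.inr ht.le)).tendsto).const_mul c
  rw [Real.zero_rpow ht.ne', mul_zero] at this
  exact this.mono_left nhdsWithin_le_nhds

lemma qPP_tendsto {t : ℝ} (h0 : 0 < t) (h1 : t < 1) (c : ℝ) :
    Tendsto (fun q : ℝ => qP q (c * q ^ t) * qP q (c * q ^ t)⁻¹)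
      (𝓝[Set.Ioo (0:ℝ) 1] 0) (𝓝 1) := by
  have hq : Tendsto (fun q : ℝ => q) (𝓝[Set.Ioo (0:ℝ) 1] 0) (𝓝 0) :=
    tendsto_nhdsWithin_of_tendsto_nhds tendsto_id
  have hmem : ∀ᶠ q : ℝ in 𝓝[Set.Ioo (0:ℝ) 1] 0, q ∈ Set.Ioo (0:ℝ) 1 := self_mem_nhdsWithin
  have A := qP_tendsto (x := fun q => c * q ^ t) (by simpa using (rpow_tendsto h0 c).mul hq)
  have B := qP_tendsto (x := fun q => (c * q ^ t)⁻¹) (by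
    refine (rpow_tendsto (sub_pos.2 h1) c⁻¹).congr' ?_
    filter_upwards [hmem] with q h
    rw [Real.rpow_sub h.1, Real.rpow_one, mul_inv]
    ring)
  simpa using A.mul B

lemma main0 {a : ℝ} (ha : 0 < a) (ha1 : a ≠ 1) {t : ℝ} (h0 : 0 < t) (h1 : t < 1)
    {z : ℝ} (hz : 0 < z) :
    Tendsto (fun q : ℝ => fTheta q (z * q ^ t) a) (𝓝[Set.Ioo (0:ℝ) 1] 0) (𝓝 (a - 1)⁻¹) := by
  have hq : Tendsto (fun q : ℝ => q) (𝓝[Set.Ioo (0:ℝ) 1] 0) (𝓝 0) :=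
    tendsto_nhdsWithin_of_tendsto_nhds tendsto_id
  have hmem : ∀ᶠ q : ℝ in 𝓝[Set.Ioo (0:ℝ) 1] 0, q ∈ Set.Ioo (0:ℝ) 1 := self_mem_nhdsWithin
  have hsub : a - 1 ≠ 0 := sub_ne_zero.2 ha1
  have A1 := qPP_tendsto h0 h1 (a * z)
  have A2 := qPP_tendsto h0 h1 z
  have A3 := (qP_tendsto (x := fun _ => a) (by simpa using hq.const_mul a)).mul
    (qP_tendsto (x := fun _ => a⁻¹) (by simpa using hq.const_mul a⁻¹))
  have hx := rpow_tendsto h0 z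
  have R : Tendsto (fun q : ℝ => (a * (z * q ^ t) - 1) / ((a - 1) * ((z * q ^ t) - 1)))
      (𝓝[Set.Ioo (0:ℝ) 1] 0) (𝓝 (a - 1)⁻¹) := by
    have := ((hx.const_mul a).sub_const 1).div ((hx.sub_const 1).const_mul (a - 1)) (mul_ne_zero hsub (by norm_num))
    have e : (a * 0 - 1) / ((a - 1) * (0 - 1)) = (a - 1)⁻¹ := by
      field_simp
      norm_num
    rw [e] at this
    exact this
  have T := R.mul (A1.div (A3.mul A2) (by norm_num))
  simp only [mul_one, div_one] at T
  refine T.congr' ?_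
  filter_upwards [hmem] with q h
  have hp : 0 < z * q ^ t := mul_pos hz (Real.rpow_pos_of_pos h.1 t)
  unfold fTheta
  rw [qTheta_eq h.1 h.2, qTheta_eq h.1 h.2, qTheta_eq h.1 h.2]
  simp only [Pi.div_apply, mul_assoc a z]
  generalize z * q ^ t = y at *
  generalize qP q (a * y) * qP q (a * y)⁻¹ = X
  generalize qP q a * qP q a⁻¹ = Y
  generalize qP q y * qP q y⁻¹ = Z
  rw [mul_mul_mul_comm, mul_div_mul_comm]
  congr 1
  rw [Real.sqrt_mul ha.le]
  obtain ⟨u, hu, rfl⟩ : ∃ u, 0 < u ∧ u ^ 2 = a := ⟨√a, Real.sqrt_pos.2 ha, Real.sq_sqrt ha.le⟩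
  obtain ⟨v, hv, rfl⟩ : ∃ u, 0 < u ∧ u ^ 2 = y := ⟨√y, Real.sqrt_pos.2 hp, Real.sq_sqrt hp.le⟩
  rw [Real.sqrt_sq hu.le, Real.sqrt_sq hv.le]
  have e1 : u * v - (u * v)⁻¹ = (u ^ 2 * v ^ 2 - 1) * (u * v)⁻¹ := by field_simp
  have e2 : (u - u⁻¹) * (v - v⁻¹) = ((u ^ 2 - 1) * (v ^ 2 - 1)) * (u * v)⁻¹ := by field_simp
  rw [e1, e2, mul_div_mul_right _ _ (by positivity)]

lemma main1 {a : ℝ} (ha : 0 < a) (ha1 : a ≠ 1) (m : ℤ) {s : ℝ} (h0 : (m:ℝ) < s)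
    (h1 : s < (m:ℝ) + 1) {z : ℝ} (hz : 0 < z) :
    Tendsto (fun q : ℝ => fTheta q (z * q ^ s) a) (𝓝[Set.Ioo (0:ℝ) 1] 0)
      (𝓝 ((a⁻¹) ^ m * (a - 1)⁻¹)) := by
  have hmem : ∀ᶠ q : ℝ in 𝓝[Set.Ioo (0:ℝ) 1] 0, q ∈ Set.Ioo (0:ℝ) 1 := self_mem_nhdsWithin
  refine ((main0 ha ha1 (t := s - m) (by linarith) (by linarith) hz).const_mul ((a⁻¹) ^ m)).congr' ?_
  filter_upwards [hmem] with q h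
  have := Real.rpow_pos_of_pos h.1 (s - m)
  rw [← fTheta_shift_zpow h.1 h.2 ha (by positivity)]
  congr 1
  rw [← Real.rpow_intCast, mul_left_comm, ← Real.rpow_add h.1]
  congr 2
  ring

/-- Let `a > 0`, `a ≠ 1`, `m : ℤ`, and let `s, s'` be reals with
`m < s < m + 1` and `m < s' < m + 1`, and `z, z' > 0`. Then the `q → 0⁺` limits of
`f_q(z q^s, a)` and `f_q(z' q^{s'}, a)` exist and are equal: the limit is a
locally constant function of `s` off the integers, independent of `z` there. -/
theorem fTheta_limit_locally_constant (a : ℝ) (ha : 0 < a) (ha1 : a ≠ 1)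
    (m : ℤ) (s s' : ℝ) (hs : (m : ℝ) < s) (hs' : s < (m : ℝ) + 1)
    (ht : (m : ℝ) < s') (ht' : s' < (m : ℝ) + 1)
    (z z' : ℝ) (hz : 0 < z) (hz' : 0 < z') :
    ∃ L : ℝ,
      Tendsto (fun q : ℝ => fTheta q (z * q ^ s) a)
        (𝓝[Set.Ioo (0:ℝ) 1] 0) (𝓝 L) ∧
      Tendsto (fun q : ℝ => fTheta q (z' * q ^ s') a)
        (𝓝[Set.Ioo (0:ℝ) 1] 0) (𝓝 L) := by
  exact ⟨_, main1 ha ha1 m hs hs' hz, main1 ha ha1 m ht ht' hz'⟩
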